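/- Let R be a commutative ring containing ℚ, t ∈ R, and suppose elements q_1, q_2, ..., q_m ∈ R satisfy the Monk-type recursion q_1 = p and p · q_i = i·t·q_i + q_{i+1} for 1 ≤ i ≤ m-1, where p ∈ R. Then p^k = Σ_{j=1}^{k} S(k,j) t^{k-j} q_j for all 1 ≤ k ≤ m, where S(k,j) are Stirling numbers of the second kind. -/

import Mathlib

/-- Stirling numbers of the second kind. -/
def stirling : ℕ → ℕ → ℕ
  | 0, 0 => 1
  | 0, _ + 1 => 0
  | _ + 1, 0 => 0
  | n + 1, k + 1 => (k + 1) * stirling n (k + 1) + stirling n k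

theorem stirling_eq_zero : ∀ {n k : ℕ}, n < k → stirling n k = 0
  | _, 0, hk => absurd hk (Nat.not_lt_zero _)
  | 0, _ + 1, _ => by rw [stirling]
  | n + 1, k + 1, hk => by
    rw [stirling, stirling_eq_zero (by omega : n < k + 1), stirling_eq_zero (by omega : n < k), Nat.mul_zero]

theorem stmt7_aux {R : Type*} [CommRing R] (m : ℕ) (t p : R) (q : ℕ → R)
    (h1 : q 1 = p)
    (hrec : ∀ i, 1 ≤ i → i ≤ m - 1 → p * q i = (i : R) * t * q i + q (i + 1)) (k : ℕ)
    (hk : k + 1 ≤ m) :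
    p ^ (k + 1) = ∑ i ∈ Finset.range (k + 1),
      (stirling (k + 1) (i + 1) : R) * t ^ (k - i) * q (i + 1) := by
  induction k with
  | zero => simp [stirling, h1]
  | succ k ih =>
    have hs : ∀ i, stirling (k + 1 + 1) (i + 1)
        = (i + 1) * stirling (k + 1) (i + 1) + stirling (k + 1) i := fun i => rfl
    have h0 : stirling (k + 1) 0 = 0 := rfl
    have hs' : ∀ i, (stirling (k + 1 + 1) (i + 1) : R) * t ^ (k + 1 - i) * q (i + 1)
        = ((i + 1 : ℕ) : R) * (stirling (k + 1) (i + 1) : R) * t ^ (k + 1 - i) * q (i + 1)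
          + (stirling (k + 1) i : R) * t ^ (k + 1 - i) * q (i + 1) := fun i => by
      rw [hs]; push_cast; ring
    simp only [hs', Finset.sum_add_distrib]
    rw [Finset.sum_range_succ, Finset.sum_range_succ' (fun i =>
      (stirling (k + 1) i : R) * t ^ (k + 1 - i) * q (i + 1)),
      stirling_eq_zero (by omega : k + 1 < k + 1 + 1), h0, pow_succ', ih (by omega),
      Finset.mul_sum]
    simp only [Nat.cast_zero, mul_zero, zero_mul, add_zero]
    rw [← Finset.sum_add_distrib]
    refine Finset.sum_congr rfl fun i hi => ?_
    have hi' := Finset.mem_range.mp hi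
    have h := hrec (i + 1) (by omega) (by omega)
    rw [show k + 1 - i = (k - i) + 1 by omega, show k + 1 - (i + 1) = k - i by omega, pow_succ]
    push_cast at h ⊢
    linear_combination (stirling (k + 1) (i + 1) : R) * t ^ (k - i) * h

/-- If `R` is a commutative ring containing `ℚ`, `t, p ∈ R`, and `q_1, ..., q_m ∈ R` satisfy
the Monk-type recursion `q_1 = p` and `p · q_i = i·t·q_i + q_{i+1}` for `1 ≤ i ≤ m-1`, then
`p^k = Σ_{j=1}^{k} S(k,j) t^{k-j} q_j` for all `1 ≤ k ≤ m`. -/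
theorem stmt7 {R : Type*} [CommRing R] [Algebra ℚ R] (m : ℕ) (t p : R) (q : ℕ → R)
    (h1 : q 1 = p)
    (hrec : ∀ i, 1 ≤ i → i ≤ m - 1 → p * q i = (i : R) * t * q i + q (i + 1)) :
    ∀ k, 1 ≤ k → k ≤ m →
      p ^ k = ∑ j ∈ Finset.Icc 1 k, (stirling k j : R) * t ^ (k - j) * q j := by
  intro k hk hkm
  obtain ⟨k, rfl⟩ := Nat.exists_eq_add_of_le' hk
  rw [stmt7_aux m t p q h1 hrec k hkm,
    ← Finset.Ico_add_one_right_eq_Icc, Finset.sum_Ico_eq_sum_range]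
  refine Finset.sum_congr (by simp) fun i _ => ?_
  rw [add_comm 1 i, Nat.add_sub_add_right]
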